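/- Let L, M, i, j be non-negative integers with M ≥ L ≥ i+j. Let V(n; i, j, L, M) denote the number of pairs (π₁, π₂) where π₁ is a partition into exactly i distinct a-parts each ≤ M−j, π₂ is a partition into exactly j distinct b-parts each ≤ L, and the combined sum of parts is n. For non-negative integers r, s, t, l, let S(n; r, s, t, l, L, M) denote the number of Type-1 partitions of n having exactly r parts of color a with subscript ≤ M, exactly s parts of color b with subscript ≤ L−l, exactly t parts of color ab with subscript ≤ M, such that exactly l of the parts of color a or ab have subscript ≥ L−l+2, and no part (of any color) has subscript equal to L−l+1. Then V(n; i, j, L, M) = \sum_{r+t=i, s+t=j} \sum_{l ≥ 0} S(n; r, s, t, l, L, M). -/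

import Mathlib

/-- The three colors `a`, `b`, `ab` of the Alladi–Gordon weighted words. -/
inductive PColor | a | b | ab
deriving DecidableEq

/-- A colored part: a color together with a subscript. -/
abbrev CPart := PColor × ℕ

/-- A Type-1 partition: a list of valid colored symbols (`a_m, b_m` for `m ≥ 1`,
`ab_m` for `m ≥ 2`) whose subscripts decrease with gap `≥ 1` between consecutive
symbols, the gap being `≥ 2` when the larger symbol has color `ab`, or the larger
symbol has color `a` and the smaller one has color `b`. -/
def IsType1 (π : List CPart) : Prop :=
  (∀ p ∈ π, 1 ≤ p.2 ∧ (p.1 = PColor.ab → 2 ≤ p.2)) ∧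
  π.Chain' (fun x y => y.2 + 1 ≤ x.2 ∧
    ((x.1 = PColor.ab ∨ (x.1 = PColor.a ∧ y.1 = PColor.b)) → y.2 + 2 ≤ x.2))

/-- Number of parts of a given color. -/
def colorCount (c : PColor) (π : List CPart) : ℕ := (π.filter (fun p => p.1 = c)).length

/-- The sum of the subscripts. -/
def wt (π : List CPart) : ℕ := (π.map Prod.snd).sum

/-- `Vb n i j L M`: the number of vector partitions `(π₁, π₂)` of `n` where `π₁` has
exactly `i` distinct a-parts, each `≤ M - j`, and `π₂` has exactly `j` distinct
b-parts, each `≤ L`. -/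
noncomputable def Vb (n i j L M : ℕ) : ℕ :=
  {p : List ℕ × List ℕ | p.1.Chain' (· > ·) ∧ p.2.Chain' (· > ·) ∧
    (∀ x ∈ p.1, 0 < x ∧ (x : ℤ) ≤ (M : ℤ) - (j : ℤ)) ∧
    (∀ x ∈ p.2, 0 < x ∧ x ≤ L) ∧
    p.1.length = i ∧ p.2.length = j ∧ p.1.sum + p.2.sum = n}.ncard

/-- `Sb n r s t l L M`: the number of Type-1 partitions of `n` with exactly `r` a-parts
each of subscript `≤ M`, exactly `s` b-parts each of subscript `≤ L - l`, exactly `t`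
ab-parts each of subscript `≤ M`, such that exactly `l` of the parts of color `a` or
`ab` have subscript `≥ L - l + 2`, and no part has subscript `= L - l + 1`. -/
noncomputable def Sb (n r s t l L M : ℕ) : ℕ :=
  {π : List CPart | IsType1 π ∧
    colorCount PColor.a π = r ∧ (∀ p ∈ π, p.1 = PColor.a → p.2 ≤ M) ∧
    colorCount PColor.b π = s ∧
      (∀ p ∈ π, p.1 = PColor.b → (p.2 : ℤ) ≤ (L : ℤ) - (l : ℤ)) ∧
    colorCount PColor.ab π = t ∧ (∀ p ∈ π, p.1 = PColor.ab → p.2 ≤ M) ∧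
    (π.filter (fun p => (p.1 = PColor.a ∨ p.1 = PColor.ab) ∧
      (L : ℤ) - (l : ℤ) + 2 ≤ (p.2 : ℤ))).length = l ∧
    (∀ p ∈ π, (p.2 : ℤ) ≠ (L : ℤ) - (l : ℤ) + 1) ∧
    wt π = n}.ncard

open Polynomial in
/-- Generating polynomial of a set with respect to a weight. -/
noncomputable def gf {α : Type*} (w : α → ℕ) (S : Set α) : ℤ[X] := ∑ᶠ x ∈ S, X ^ w x

section algebra
open Polynomial

theorem gf_union {α : Type*} (w : α → ℕ) {S T : Set α} (hS : S.Finite) (hT : T.Finite)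
    (h : Disjoint S T) : gf w (S ∪ T) = gf w S + gf w T :=
  finsum_mem_union h hS hT

theorem gf_image {α β : Type*} (w : α → ℕ) (v : β → ℕ) (f : β → α) (hf : Function.Injective f)
    (m : ℕ) (S : Set β) (hw : ∀ x, w (f x) = v x + m) (hS : S.Finite) :
    gf w (f '' S) = X ^ m * gf v S := by
  unfold gf
  rw [finsum_mem_image hf.injOn, mul_finsum_mem' _ _ hS]
  refine finsum_mem_congr rfl fun x _ => ?_
  rw [hw, pow_add, mul_comm]

theorem gf_coeff {α : Type*} (w : α → ℕ) (S : Set α) (hS : S.Finite) (n : ℕ) :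
    (gf w S).coeff n = (({x | x ∈ S ∧ w x = n}.ncard : ℕ) : ℤ) := by
  classical
  unfold gf
  rw [finsum_mem_eq_finite_toFinset_sum _ hS, finsetSum_coeff]
  simp only [coeff_X_pow]
  rw [Finset.sum_boole]
  congr 1
  rw [← Set.ncard_coe_finset]
  congr 1
  ext x
  simp [eq_comm]

theorem gf_prod {α β : Type*} (w : α → ℕ) (v : β → ℕ) (S : Set α) (T : Set β) (hS : S.Finite)
    (hT : T.Finite) : gf (fun p : α × β => w p.1 + v p.2) (S ×ˢ T) = gf w S * gf v T := by
  classical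
  unfold gf
  rw [finsum_mem_eq_finite_toFinset_sum _ hS, finsum_mem_eq_finite_toFinset_sum _ hT,
    finsum_mem_eq_finite_toFinset_sum _ (hS.prod hT), Finset.sum_mul_sum, ← Finset.sum_product']
  refine Finset.sum_congr ?_ fun x _ => pow_add _ _ _
  ext x; simp

/-- `q`-binomials with the triangular power of `q`. -/
noncomputable def ee : ℕ → ℤ → ℤ[X]
  | 0, k => if k = 0 then 1 else 0
  | N + 1, k => ee N k + X ^ (N + 1) * ee N (k - 1)

theorem ee_succ (N : ℕ) (k : ℤ) : ee (N + 1) k = ee N k + X ^ (N + 1) * ee N (k - 1) := rfl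

theorem ee_neg (N : ℕ) : ∀ k : ℤ, k < 0 → ee N k = 0 := by
  induction N with
  | zero => intro k hk; simp [ee, hk.ne]
  | succ N ih => intro k hk; rw [ee_succ, ih _ hk, ih _ (by omega)]; simp

theorem ee_big (N : ℕ) : ∀ k : ℤ, (N : ℤ) < k → ee N k = 0 := by
  induction N with
  | zero => intro k hk; simp at hk; simp [ee, hk.ne']
  | succ N ih => 
    intro k hk; push_cast at hk; rw [ee_succ, ih _ (by omega), ih _ (by omega)]; simp

theorem ee_zero (N : ℕ) : ee N 0 = 1 := by
  induction N with
  | zero => simp [ee]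
  | succ N ih => rw [ee_succ, ih, ee_neg _ _ (by omega)]; simp

theorem ee_shift (N : ℕ) : ∀ k : ℕ, ee (N + 1) k = X ^ k * (ee N k + ee N (k - 1)) := by
  induction N with
  | zero =>
    intro k
    rcases k with _ | _ | k
    · simp [ee]
    · simp [ee]
    · rw [ee_big _ _ (by push_cast; omega), ee_big _ _ (by push_cast; omega),
        ee_big _ _ (by push_cast; omega)]; simp
  | succ N ih =>
    intro k
    rcases k with _ | k
    · simp [ee_zero, ee_neg]
    · have h := ih k
      have h1 := ih (k + 1)
      have h2 := ee_succ N ((k + 1 : ℕ) : ℤ)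
      have h3 := ee_succ N (k : ℤ)
      rw [ee_succ (N + 1)]
      rw [show (((k + 1 : ℕ) : ℤ) - 1) = (k : ℤ) by push_cast; ring] at *
      linear_combination h1 + X ^ (N + 2) * h - X ^ (k + 1) * (h2 + h3)

theorem ee_absorb (L j : ℕ) :
    (1 - X ^ j) * ee (L + 1) j = X ^ j * (1 - X ^ (L + 1)) * ee L (j - 1) := by
  have h1 := ee_shift L j
  have h2 := ee_succ L j
  linear_combination h1 - X ^ j * h2

noncomputable def WW (L : ℕ) (i j : ℤ) : ℤ[X] := ee ((L : ℤ) - j).toNat i * ee L j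

theorem WW_rec (L : ℕ) (i j : ℤ) : WW (L + 2) i j = WW (L + 1) i j
    + X ^ (L + 2) * WW (L + 1) (i - 1) j + X ^ (L + 2) * WW (L + 1) i (j - 1)
    + X ^ (L + 2) * (1 - X ^ (L + 1)) * WW L (i - 1) (j - 1) := by
  unfold WW
  rw [show (((L + 1 : ℕ) : ℤ) - (j - 1)) = ((L + 2 : ℕ) : ℤ) - j by push_cast; ring,
    show ((L : ℤ) - (j - 1)) = ((L + 1 : ℕ) : ℤ) - j by push_cast; ring]
  rw [ee_succ (L + 1) j]
  by_cases hj : j < 0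
  · rw [ee_neg _ _ hj, ee_neg _ (j - 1) (by omega), ee_neg _ (j - 1) (by omega)]; simp
  by_cases hj2 : (L : ℤ) + 1 < j
  · rw [ee_big (L + 1) _ (by push_cast; omega), ee_big L (j - 1) (by omega)]; simp; ring
  obtain ⟨j, rfl⟩ := Int.eq_ofNat_of_zero_le (not_lt.mp hj)
  obtain ⟨K, hK⟩ : ∃ K, L + 1 = K + j := ⟨L + 1 - j, by omega⟩
  rw [show (((L + 1 : ℕ) : ℤ) - (j : ℤ)).toNat = K by omega,
    show (((L + 2 : ℕ) : ℤ) - (j : ℤ)).toNat = K + 1 by omega, ee_succ K]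
  have h := ee_absorb L j
  rw [show L + 2 = K + j + 1 by omega]
  rw [hK] at h ⊢
  linear_combination (ee K (i - 1)) * X ^ (K + 1) * h

theorem WW_zero (i j : ℤ) : WW 0 i j = if i = 0 ∧ j = 0 then 1 else 0 := by
  unfold WW
  by_cases hj : j = 0
  · subst hj; simp [ee]
  · simp [ee, hj]

theorem WW_one (i j : ℤ) : WW 1 i j = WW 0 i j + X * WW 0 (i - 1) j + X * WW 0 i (j - 1) := by
  rw [WW_zero, WW_zero, WW_zero, WW]
  by_cases hj : j = 0
  · subst hj; simp [ee]
  by_cases hj : j = 1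
  · subst hj; simp [ee]
  · simp [ee, *, sub_eq_zero]

/-- The generating polynomial of the pairs. -/
noncomputable def VV (L M : ℕ) (i j : ℤ) : ℤ[X] := ee ((M : ℤ) - j).toNat i * ee L j

theorem VV_rec (L M : ℕ) (i j : ℤ) (hLM : L ≤ M) (hij : i + j ≤ L + 1) :
    VV (L + 1) (M + 2) i j = VV (L + 1) (M + 1) i j + X ^ (M + 2) * VV L (M + 1) (i - 1) j
      + X ^ (M + 2) * VV L M (i - 1) (j - 1) := by
  unfold VV
  by_cases hi : i < 0
  · rw [ee_neg _ _ hi, ee_neg _ _ hi, ee_neg _ (i - 1) (by omega), ee_neg _ (i - 1) (by omega)]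
    simp
  by_cases hj : j < 0
  · rw [ee_neg _ _ hj, ee_neg _ _ hj, ee_neg _ (j - 1) (by omega)]; simp
  obtain ⟨j, rfl⟩ := Int.eq_ofNat_of_zero_le (not_lt.mp hj)
  obtain ⟨K, hK⟩ : ∃ K, M + 1 = K + j := ⟨M + 1 - j, by omega⟩
  rw [show (((M + 1 : ℕ) : ℤ) - (j : ℤ)).toNat = K by omega,
    show ((M : ℤ) - ((j : ℤ) - 1)).toNat = K by omega,
    show (((M + 2 : ℕ) : ℤ) - (j : ℤ)).toNat = K + 1 by omega, ee_succ K]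
  have h := ee_shift L j
  rw [show M + 2 = K + j + 1 by omega]
  linear_combination (ee K (i - 1)) * X ^ (K + 1) * h
end algebra

section type1
open Polynomial

theorem isType1_iff (π : List CPart) : IsType1 π ↔
    (∀ p ∈ π, 1 ≤ p.2 ∧ (p.1 = PColor.ab → 2 ≤ p.2)) ∧
    π.Pairwise (fun x y => y.2 + 1 ≤ x.2 ∧
    ((x.1 = PColor.ab ∨ (x.1 = PColor.a ∧ y.1 = PColor.b)) → y.2 + 2 ≤ x.2)) := by
  unfold IsType1
  haveI : IsTrans CPart (fun x y => y.2 + 1 ≤ x.2 ∧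
    ((x.1 = PColor.ab ∨ (x.1 = PColor.a ∧ y.1 = PColor.b)) → y.2 + 2 ≤ x.2)) :=
    ⟨fun x y z h1 h2 => ⟨by omega, fun _ => by omega⟩⟩
  exact and_congr_right fun _ => List.isChain_iff_pairwise

theorem isType1_nil : IsType1 [] := by simp [isType1_iff]

theorem isType1_cons (c : PColor) (m : ℕ) (π : List CPart) : IsType1 ((c, m) :: π) ↔
    (1 ≤ m ∧ (c = PColor.ab → 2 ≤ m)) ∧ (∀ y ∈ π, y.2 + 1 ≤ m ∧
    ((c = PColor.ab ∨ (c = PColor.a ∧ y.1 = PColor.b)) → y.2 + 2 ≤ m)) ∧ IsType1 π := by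
  simp only [isType1_iff, List.pairwise_cons, List.forall_mem_cons]
  tauto

/-- Number of parts of color `a` or `ab`. -/
def ia (π : List CPart) : ℕ := colorCount PColor.a π + colorCount PColor.ab π
/-- Number of parts of color `b` or `ab`. -/
def ib (π : List CPart) : ℕ := colorCount PColor.b π + colorCount PColor.ab π

@[simp] theorem ia_nil : ia [] = 0 := rfl
@[simp] theorem ib_nil : ib [] = 0 := rfl
@[simp] theorem ia_a (m π) : ia ((PColor.a, m) :: π) = ia π + 1 := by
  simp [ia, colorCount]; omega
@[simp] theorem ia_b (m π) : ia ((PColor.b, m) :: π) = ia π := by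
  simp [ia, colorCount]
@[simp] theorem ia_ab (m π) : ia ((PColor.ab, m) :: π) = ia π + 1 := by
  simp [ia, colorCount]; omega
@[simp] theorem ib_a (m π) : ib ((PColor.a, m) :: π) = ib π := by
  simp [ib, colorCount]
@[simp] theorem ib_b (m π) : ib ((PColor.b, m) :: π) = ib π + 1 := by
  simp [ib, colorCount]; omega
@[simp] theorem ib_ab (m π) : ib ((PColor.ab, m) :: π) = ib π + 1 := by
  simp [ib, colorCount]; omega
@[simp] theorem wt_cons (c m π) : wt ((c, m) :: π) = wt π + m := by
  simp [wt]; omega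

/-- Type-1 partitions with parts at most `L`. -/
def TT (L : ℕ) : Set (List CPart) := {π | IsType1 π ∧ ∀ p ∈ π, p.2 ≤ L}

theorem TT_zero : TT 0 = {[]} := by
  ext π
  rcases π with _ | ⟨⟨c, m⟩, π⟩
  · simp [TT, isType1_nil]
  · simp only [TT, Set.mem_ofPred_eq, isType1_cons, List.forall_mem_cons, Set.mem_singleton_iff,
      reduceCtorEq, iff_false]
    rintro ⟨⟨⟨h, _⟩, _⟩, h', _⟩
    omega

theorem TT_succ (L : ℕ) (c : PColor) (m : ℕ) (π : List CPart)
    (h : (c, m) :: π ∈ TT (L + 1)) : (c, m) :: π ∈ TT L ∨ m = L + 1 ∧ π ∈ TT L := by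
  obtain ⟨h1, h2⟩ := h
  have h0 := h1
  rw [isType1_cons] at h1
  have hm : m ≤ L + 1 := h2 (c, m) (by simp)
  rcases Nat.lt_or_ge L m with h | h
  · right
    exact ⟨by omega, h1.2.2, fun p hp => by have := (h1.2.1 p hp).1; omega⟩
  · left
    refine ⟨h0, ?_⟩
    rw [List.forall_mem_cons]
    exact ⟨h, fun p hp => by have := (h1.2.1 p hp).1; omega⟩

theorem TT_finite (L : ℕ) : (TT L).Finite := by
  induction L with
  | zero => rw [TT_zero]; simp
  | succ L ih =>
    refine (ih.union (((ih.image (List.cons (PColor.a, L + 1))).union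
      (ih.image (List.cons (PColor.b, L + 1)))).union
      (ih.image (List.cons (PColor.ab, L + 1))))).subset ?_
    intro π hπ
    rcases π with _ | ⟨⟨c, m⟩, π⟩
    · left; exact ⟨isType1_nil, by simp⟩
    · rcases TT_succ L c m π hπ with h | ⟨rfl, h⟩
      · exact Or.inl h
      · right
        rcases c with _ | _ | _
        · exact Or.inl (Or.inl ⟨π, h, rfl⟩)
        · exact Or.inl (Or.inr ⟨π, h, rfl⟩)
        · exact Or.inr ⟨π, h, rfl⟩

def GG (L : ℕ) (i j : ℤ) : Set (List CPart) := {π | π ∈ TT L ∧ (ia π : ℤ) = i ∧ (ib π : ℤ) = j}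
def NN (L : ℕ) (i j : ℤ) : Set (List CPart) := {π | π ∈ GG L i j ∧ (PColor.b, L) ∉ π}

theorem GG_finite (L i j) : (GG L i j).Finite := (TT_finite L).subset fun _ h => h.1
theorem NN_finite (L i j) : (NN L i j).Finite := (GG_finite L i j).subset fun _ h => h.1

theorem not_mem_TT (L m : ℕ) (c : PColor) (π : List CPart) (h : L < m) :
    (c, m) :: π ∉ TT L := fun h' => by
  have := h'.2 (c, m) (by simp)
  simp at this; omega

theorem cons_TT_b (L : ℕ) (π : List CPart) :
    (PColor.b, L + 1) :: π ∈ TT (L + 1) ↔ π ∈ TT L := by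
  simp only [TT, Set.mem_ofPred_eq, isType1_cons, List.forall_mem_cons]
  constructor
  · rintro ⟨⟨_, h, h1⟩, _⟩
    exact ⟨h1, fun p hp => by have := (h p hp).1; omega⟩
  · rintro ⟨h1, h⟩
    refine ⟨⟨⟨by omega, by simp⟩, fun p hp => ⟨?_, by simp⟩, h1⟩, le_rfl, fun p hp => ?_⟩ <;>
    · have := h p hp; omega

theorem cons_TT_a (L : ℕ) (π : List CPart) :
    (PColor.a, L + 1) :: π ∈ TT (L + 1) ↔ π ∈ TT L ∧ (PColor.b, L) ∉ π := by
  simp only [TT, Set.mem_ofPred_eq, isType1_cons, List.forall_mem_cons]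
  constructor
  · rintro ⟨⟨_, h, h1⟩, _⟩
    refine ⟨⟨h1, fun p hp => by have := (h p hp).1; omega⟩, fun hb => ?_⟩
    have := (h _ hb).2 (by simp)
    simp at this
  · rintro ⟨⟨h1, h⟩, hb⟩
    refine ⟨⟨⟨by omega, by simp⟩, fun p hp => ⟨?_, ?_⟩, h1⟩, le_rfl, fun p hp => ?_⟩
    · have := h p hp; omega
    · simp only [reduceCtorEq, true_and, false_or]
      intro hc
      have := h p hp
      rcases p with ⟨c, m⟩
      simp only at hc this ⊢
      subst hc
      have : m ≠ L := by rintro rfl; exact hb hp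
      omega
    · have := h p hp; omega

theorem cons_TT_ab (L : ℕ) (π : List CPart) :
    (PColor.ab, L + 2) :: π ∈ TT (L + 2) ↔ π ∈ TT L := by
  simp only [TT, Set.mem_ofPred_eq, isType1_cons, List.forall_mem_cons]
  constructor
  · rintro ⟨⟨_, h, h1⟩, _⟩
    exact ⟨h1, fun p hp => by have := (h p hp).2 (by simp); omega⟩
  · rintro ⟨h1, h⟩
    refine ⟨⟨⟨by omega, by simp⟩, fun p hp => ⟨?_, fun _ => ?_⟩, h1⟩, le_rfl, fun p hp => ?_⟩ <;>
    · have := h p hp; omega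

theorem TT_mono {L M : ℕ} (h : L ≤ M) : TT L ⊆ TT M :=
  fun _ hp => ⟨hp.1, fun p hq => (hp.2 p hq).trans h⟩

theorem notMem_of_TT {L m : ℕ} {π : List CPart} (h : π ∈ TT L) (c : PColor) (hm : L < m) :
    (c, m) ∉ π := fun hp => by
  have := h.2 _ hp
  simp at this; omega

theorem GG_succ (L : ℕ) (i j : ℤ) : GG (L + 1) i j =
    NN (L + 1) i j ∪ List.cons (PColor.b, L + 1) '' GG L i (j - 1) := by
  ext π
  constructor
  · intro h
    by_cases hb : (PColor.b, L + 1) ∈ π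
    · right
      rcases π with _ | ⟨⟨c, m⟩, π⟩
      · simp at hb
      rcases TT_succ L c m π h.1 with h' | ⟨rfl, h'⟩
      · exact absurd hb (notMem_of_TT h' _ (by omega))
      · rcases List.mem_cons.mp hb with hb | hb
        · obtain ⟨rfl, -⟩ := Prod.mk.inj hb
          refine ⟨π, ⟨h', ?_, ?_⟩, rfl⟩
          · simpa using h.2.1
          · have := h.2.2
            simp at this; omega
        · exact absurd hb (notMem_of_TT h' _ (by omega))
    · exact Or.inl ⟨h, hb⟩
  · rintro (h | ⟨π, ⟨h1, h2, h3⟩, rfl⟩)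
    · exact h.1
    · refine ⟨(cons_TT_b L π).2 h1, by simpa using h2, ?_⟩
      simp; omega

theorem NN_succ (L : ℕ) (i j : ℤ) : NN (L + 2) i j =
    GG (L + 1) i j ∪ (List.cons (PColor.a, L + 2) '' NN (L + 1) (i - 1) j
      ∪ List.cons (PColor.ab, L + 2) '' GG L (i - 1) (j - 1)) := by
  ext π
  constructor
  · rintro ⟨⟨h1, h2, h3⟩, hb⟩
    rcases π with _ | ⟨⟨c, m⟩, π⟩
    · exact Or.inl ⟨⟨isType1_nil, by simp⟩, h2, h3⟩
    rcases TT_succ (L + 1) c m π h1 with h' | ⟨rfl, h'⟩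
    · exact Or.inl ⟨h', h2, h3⟩
    · right
      rcases c with _ | _ | _
      · left
        have := (cons_TT_a _ _).1 h1
        simp at h2 h3
        exact ⟨π, ⟨⟨this.1, by omega, by omega⟩, this.2⟩, rfl⟩
      · simp at hb
      · right
        have := (cons_TT_ab _ _).1 h1
        simp at h2 h3
        exact ⟨π, ⟨this, by omega, by omega⟩, rfl⟩
  · rintro (⟨h1, h2, h3⟩ | ⟨π, ⟨⟨h1, h2, h3⟩, hb⟩, rfl⟩ | ⟨π, ⟨h1, h2, h3⟩, rfl⟩)
    · exact ⟨⟨TT_mono (by omega) h1, h2, h3⟩, notMem_of_TT h1 _ (by omega)⟩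
    · refine ⟨⟨(cons_TT_a _ _).2 ⟨h1, hb⟩, ?_, ?_⟩, ?_⟩
      · simp; omega
      · simp; omega
      · simpa using notMem_of_TT h1 _ (by omega)
    · refine ⟨⟨(cons_TT_ab _ _).2 h1, ?_, ?_⟩, ?_⟩
      · simp; omega
      · simp; omega
      · simpa using notMem_of_TT h1 _ (by omega)

theorem NN_one (i j : ℤ) : NN 1 i j =
    GG 0 i j ∪ List.cons (PColor.a, 1) '' GG 0 (i - 1) j := by
  ext π
  constructor
  · rintro ⟨⟨h1, h2, h3⟩, hb⟩
    rcases π with _ | ⟨⟨c, m⟩, π⟩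
    · exact Or.inl ⟨⟨isType1_nil, by simp⟩, h2, h3⟩
    rcases TT_succ 0 c m π h1 with h' | ⟨rfl, h'⟩
    · exact Or.inl ⟨h', h2, h3⟩
    · right
      rcases c with _ | _ | _
      · simp at h2 h3
        exact ⟨π, ⟨h', by omega, by omega⟩, rfl⟩
      · simp at hb
      · have := h1.1
        rw [isType1_cons] at this
        simp at this
  · rintro (⟨h1, h2, h3⟩ | ⟨π, ⟨h1, h2, h3⟩, rfl⟩)
    · exact ⟨⟨TT_mono (by omega) h1, h2, h3⟩, notMem_of_TT h1 _ (by omega)⟩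
    · have h0 := h1
      rw [TT_zero] at h0
      obtain rfl := h0
      refine ⟨⟨(cons_TT_a 0 _).2 ⟨h1, by simp⟩, ?_, ?_⟩, ?_⟩
      · simp at h2 ⊢; omega
      · simpa using h3
      · simp

theorem gG_succ (L : ℕ) (i j : ℤ) : gf wt (GG (L + 1) i j) =
    gf wt (NN (L + 1) i j) + X ^ (L + 1) * gf wt (GG L i (j - 1)) := by
  rw [GG_succ, gf_union _ (NN_finite _ _ _) ((GG_finite _ _ _).image _),
    gf_image wt wt _ (List.cons_injective) (L + 1) _ (fun x => by simp) (GG_finite _ _ _)]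
  rw [Set.disjoint_left]
  rintro _ h ⟨π, _, rfl⟩
  exact h.2 (by simp)

theorem gN_succ (L : ℕ) (i j : ℤ) : gf wt (NN (L + 2) i j) =
    gf wt (GG (L + 1) i j) + (X ^ (L + 2) * gf wt (NN (L + 1) (i - 1) j)
      + X ^ (L + 2) * gf wt (GG L (i - 1) (j - 1))) := by
  rw [NN_succ, gf_union _ (GG_finite _ _ _)
      (((NN_finite _ _ _).image _).union ((GG_finite _ _ _).image _)),
    gf_union _ ((NN_finite _ _ _).image _) ((GG_finite _ _ _).image _),
    gf_image wt wt _ (List.cons_injective) (L + 2) _ (fun x => by simp) (GG_finite _ _ _),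
    gf_image wt wt _ (List.cons_injective) (L + 2) _ (fun x => by simp) (NN_finite _ _ _)]
  · rw [Set.disjoint_left]
    rintro _ ⟨π, _, rfl⟩ ⟨π', _, h⟩
    simp at h
  · rw [Set.disjoint_left]
    rintro _ h (⟨π, _, rfl⟩ | ⟨π, _, rfl⟩) <;> exact not_mem_TT _ _ _ _ (by omega) h.1

theorem gN_one (i j : ℤ) : gf wt (NN 1 i j) =
    gf wt (GG 0 i j) + X * gf wt (GG 0 (i - 1) j) := by
  rw [NN_one, gf_union _ (GG_finite _ _ _) ((GG_finite _ _ _).image _),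
    gf_image wt wt _ (List.cons_injective) 1 _ (fun x => by simp) (GG_finite _ _ _), pow_one]
  · rw [Set.disjoint_left]
    rintro _ h ⟨π, _, rfl⟩
    exact not_mem_TT _ _ _ _ (by omega) h.1

theorem gG_zero (i j : ℤ) : gf wt (GG 0 i j) = if i = 0 ∧ j = 0 then 1 else 0 := by
  split_ifs with h
  · obtain ⟨rfl, rfl⟩ := h
    have : GG 0 0 0 = {[]} := by
      ext π
      simp only [GG, TT_zero, Set.mem_ofPred_eq, Set.mem_singleton_iff]
      constructor
      · exact fun h => h.1
      · rintro rfl; simp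
    rw [this, gf, finsum_mem_singleton]
    simp [wt]
  · have : GG 0 i j = ∅ := by
      ext π
      simp only [GG, TT_zero, Set.mem_ofPred_eq, Set.mem_singleton_iff, Set.mem_empty_iff_false,
        iff_false]
      rintro ⟨rfl, h1, h2⟩
      simp at h1 h2
      omega
    rw [this, gf, finsum_mem_empty]

theorem gG_eq (L : ℕ) : ∀ i j : ℤ, gf wt (GG L i j) = WW L i j ∧
    gf wt (GG (L + 1) i j) = WW (L + 1) i j := by
  induction L with
  | zero =>
    intro i j
    have h0 : ∀ i j, gf wt (GG 0 i j) = WW 0 i j := fun i j => by rw [gG_zero, WW_zero]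
    refine ⟨h0 i j, ?_⟩
    rw [gG_succ, gN_one, h0, h0, h0, zero_add, WW_one, pow_one]
  | succ L ih =>
    intro i j
    refine ⟨(ih i j).2, ?_⟩
    rw [gG_succ, gN_succ, WW_rec, ← (ih i j).2, ← (ih (i - 1) j).2, ← (ih i (j - 1)).2,
      ← (ih (i - 1) (j - 1)).1, gG_succ L (i - 1) j]
    ring

end type1

section pairs
open Polynomial

/-- Number of parts of color `a` or `ab` with subscript at least `c`. -/
def nbig (c : ℤ) (π : List CPart) : ℕ :=
  (π.filter (fun p => (p.1 = PColor.a ∨ p.1 = PColor.ab) ∧ c ≤ (p.2 : ℤ))).length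

theorem nbig_a (c : ℤ) (m : ℕ) (π : List CPart) (h : c ≤ m) :
    nbig c ((PColor.a, m) :: π) = nbig c π + 1 := by simp [nbig, h]
theorem nbig_ab (c : ℤ) (m : ℕ) (π : List CPart) (h : c ≤ m) :
    nbig c ((PColor.ab, m) :: π) = nbig c π + 1 := by simp [nbig, h]

theorem nbig_le_ia (c : ℤ) (π : List CPart) : nbig c π ≤ ia π := by
  induction π with
  | nil => simp [nbig]
  | cons p π ih =>
    rcases p with ⟨_ | _ | _, m⟩
    · by_cases h : c ≤ m
      · rw [nbig_a _ _ _ h, ia_a]; omega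
      · simp [nbig, h] at ih ⊢; omega
    · simp [nbig] at ih ⊢; omega
    · by_cases h : c ≤ m
      · rw [nbig_ab _ _ _ h, ia_ab]; omega
      · simp [nbig, h] at ih ⊢; omega

/-- Type-1 partitions together with the parameter `l`. -/
def FF (L M : ℕ) (i j : ℤ) : Set (List CPart × ℕ) :=
  {x | x.1 ∈ TT M ∧ (ia x.1 : ℤ) = i ∧ (ib x.1 : ℤ) = j ∧
    (∀ p ∈ x.1, p.1 = PColor.b → (p.2 : ℤ) ≤ (L : ℤ) - (x.2 : ℤ)) ∧
    nbig ((L : ℤ) - (x.2 : ℤ) + 2) x.1 = x.2 ∧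
    (∀ p ∈ x.1, (p.2 : ℤ) ≠ (L : ℤ) - (x.2 : ℤ) + 1)}

theorem FF_finite (L M i j) : (FF L M i j).Finite := by
  refine ((TT_finite M).prod (Set.finite_Iic i.toNat)).subset ?_
  rintro ⟨π, l⟩ ⟨h1, h2, h3, h4, h5, h6⟩
  refine ⟨h1, ?_⟩
  have := nbig_le_ia ((L : ℤ) - (l : ℤ) + 2) π
  simp only [Set.mem_Iic] at *
  omega

/-- Attaching a largest part. -/
def att (c : PColor) (m : ℕ) (x : List CPart × ℕ) : List CPart × ℕ := ((c, m) :: x.1, x.2 + 1)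

theorem att_inj (c m) : Function.Injective (att c m) := by
  rintro ⟨π, l⟩ ⟨π', l'⟩ h
  simp [att] at h
  simp [h]

theorem FF_rec (L M : ℕ) (i j : ℤ) (hLM : L ≤ M) : FF (L + 1) (M + 2) i j =
    FF (L + 1) (M + 1) i j ∪ (att PColor.a (M + 2) '' FF L (M + 1) (i - 1) j
      ∪ att PColor.ab (M + 2) '' FF L M (i - 1) (j - 1)) := by
  ext ⟨π, l⟩
  constructor
  · rintro ⟨h1, h2, h3, h4, h5, h6⟩
    simp only at h1 h2 h3 h4 h5 h6
    rcases π with _ | ⟨⟨c, m⟩, π⟩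
    · exact Or.inl ⟨⟨isType1_nil, by simp⟩, h2, h3, h4, h5, h6⟩
    rcases TT_succ (M + 1) c m π h1 with h' | ⟨rfl, h'⟩
    · exact Or.inl ⟨h', h2, h3, h4, h5, h6⟩
    right
    have hc : c ≠ PColor.b := by
      rintro rfl
      have := h4 _ List.mem_cons_self rfl
      push_cast at this; omega
    have h60 := h6 _ List.mem_cons_self
    push_cast at h60
    have hl : ((L + 1 : ℕ) : ℤ) - (l : ℤ) + 2 ≤ ((M + 1 + 1 : ℕ) : ℤ) := by
      by_contra hcon
      have : l = 0 := by push_cast at hcon; omega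
      subst this
      push_cast at hcon h60
      omega
    rw [List.forall_mem_cons] at h4 h6
    rcases c with _ | _ | _
    · rw [nbig_a _ _ _ hl] at h5
      obtain ⟨l, rfl⟩ : ∃ l', l = l' + 1 := ⟨l - 1, by omega⟩
      rw [show ((L + 1 : ℕ) : ℤ) - ((l + 1 : ℕ) : ℤ) = (L : ℤ) - l by push_cast; ring] at h4 h5 h6
      left
      simp at h2 h3
      exact ⟨(π, l), ⟨h', by simp; omega, by simp; omega, h4.2, by simp; omega, h6.2⟩, rfl⟩
    · exact absurd rfl hc
    · rw [nbig_ab _ _ _ hl] at h5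
      obtain ⟨l, rfl⟩ : ∃ l', l = l' + 1 := ⟨l - 1, by omega⟩
      rw [show ((L + 1 : ℕ) : ℤ) - ((l + 1 : ℕ) : ℤ) = (L : ℤ) - l by push_cast; ring] at h4 h5 h6
      right
      simp at h2 h3
      exact ⟨(π, l), ⟨(cons_TT_ab _ _).1 h1, by simp; omega, by simp; omega, h4.2,
        by simp; omega, h6.2⟩, rfl⟩
  · rintro (⟨h1, h2⟩ | ⟨⟨π, l⟩, ⟨h1, h2, h3, h4, h5, h6⟩, h⟩ | ⟨⟨π, l⟩, ⟨h1, h2, h3, h4, h5, h6⟩, h⟩)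
    · exact ⟨TT_mono (by omega) h1, h2⟩
    all_goals
      obtain ⟨rfl, rfl⟩ := Prod.mk.inj h
      simp only at h1 h2 h3 h4 h5 h6
      refine ⟨?_, ?_, ?_, ?_, ?_, ?_⟩
    · refine (cons_TT_a _ _).2 ⟨h1, fun hb => ?_⟩
      have := h4 _ hb rfl
      push_cast at this; omega
    · simp; omega
    · simp; omega
    · simp only
      rw [show ((L + 1 : ℕ) : ℤ) - ((l + 1 : ℕ) : ℤ) = (L : ℤ) - l by push_cast; ring]
      rw [List.forall_mem_cons]
      exact ⟨by simp, h4⟩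
    · simp only
      rw [show ((L + 1 : ℕ) : ℤ) - ((l + 1 : ℕ) : ℤ) = (L : ℤ) - l by push_cast; ring,
        nbig_a _ _ _ (by push_cast; omega), h5]
    · simp only
      rw [show ((L + 1 : ℕ) : ℤ) - ((l + 1 : ℕ) : ℤ) = (L : ℤ) - l by push_cast; ring]
      rw [List.forall_mem_cons]
      exact ⟨by push_cast; omega, h6⟩
    · exact (cons_TT_ab _ _).2 h1
    · simp; omega
    · simp; omega
    · simp only
      rw [show ((L + 1 : ℕ) : ℤ) - ((l + 1 : ℕ) : ℤ) = (L : ℤ) - l by push_cast; ring]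
      rw [List.forall_mem_cons]
      exact ⟨by simp, h4⟩
    · simp only
      rw [show ((L + 1 : ℕ) : ℤ) - ((l + 1 : ℕ) : ℤ) = (L : ℤ) - l by push_cast; ring,
        nbig_ab _ _ _ (by push_cast; omega), h5]
    · simp only
      rw [show ((L + 1 : ℕ) : ℤ) - ((l + 1 : ℕ) : ℤ) = (L : ℤ) - l by push_cast; ring]
      rw [List.forall_mem_cons]
      exact ⟨by push_cast; omega, h6⟩

/-- Weight of a pair. -/
def wt1 (x : List CPart × ℕ) : ℕ := wt x.1

theorem gF_rec (L M : ℕ) (i j : ℤ) (hLM : L ≤ M) : gf wt1 (FF (L + 1) (M + 2) i j) =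
    gf wt1 (FF (L + 1) (M + 1) i j) + (X ^ (M + 2) * gf wt1 (FF L (M + 1) (i - 1) j)
      + X ^ (M + 2) * gf wt1 (FF L M (i - 1) (j - 1))) := by
  rw [FF_rec _ _ _ _ hLM, gf_union _ (FF_finite _ _ _ _)
      (((FF_finite _ _ _ _).image _).union ((FF_finite _ _ _ _).image _)),
    gf_union _ ((FF_finite _ _ _ _).image _) ((FF_finite _ _ _ _).image _),
    gf_image wt1 wt1 _ (att_inj _ _) (M + 2) _ (fun x => by simp [att, wt1]) (FF_finite _ _ _ _),
    gf_image wt1 wt1 _ (att_inj _ _) (M + 2) _ (fun x => by simp [att, wt1]) (FF_finite _ _ _ _)]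
  · rw [Set.disjoint_left]
    rintro _ ⟨π, _, rfl⟩ ⟨π', _, h⟩
    simp [att] at h
  · rw [Set.disjoint_left]
    rintro _ h (⟨π, _, rfl⟩ | ⟨π, _, rfl⟩) <;> exact not_mem_TT _ _ _ _ (by omega) h.1

/-- Distinct subscripts in an interval leave room for few big parts. -/
theorem nbig_bound (c : ℤ) (M : ℕ) : ∀ π ∈ TT M, (nbig c π : ℤ) ≤ max 0 (M + 1 - c) := by
  induction M with
  | zero => intro π hπ; rw [TT_zero] at hπ; obtain rfl := hπ; simp [nbig]
  | succ M ih =>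
    intro π hπ
    rcases π with _ | ⟨⟨d, m⟩, π⟩
    · simp [nbig]
    rcases TT_succ M d m π hπ with h | ⟨rfl, h⟩
    · have := ih _ h; push_cast; omega
    · have h1 := ih _ h
      by_cases hc : c ≤ ((M + 1 : ℕ) : ℤ)
      · rcases d with _ | _ | _
        · rw [nbig_a _ _ _ hc]; push_cast at *; omega
        · have : nbig c ((PColor.b, M + 1) :: π) = nbig c π := by simp [nbig]
          rw [this]; push_cast at *; omega
        · rw [nbig_ab _ _ _ hc]; push_cast at *; omega
      · have : nbig c ((d, M + 1) :: π) = nbig c π := by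
          unfold nbig
          rw [List.filter_cons_of_neg]
          simp only [decide_eq_true_eq]
          tauto
        rw [this]; push_cast at *; omega

theorem FF_diag (L : ℕ) (i j : ℤ) : FF L L i j = (fun π => (π, 0)) '' GG L i j := by
  ext ⟨π, l⟩
  constructor
  · rintro ⟨h1, h2, h3, h4, h5, h6⟩
    have := nbig_bound ((L : ℤ) - (l : ℤ) + 2) L π h1
    simp only at h5
    rw [h5] at this
    have : l = 0 := by omega
    subst this
    exact ⟨π, ⟨h1, h2, h3⟩, rfl⟩
  · rintro ⟨π, ⟨h1, h2, h3⟩, h⟩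
    obtain ⟨rfl, rfl⟩ := Prod.mk.inj h
    refine ⟨h1, h2, h3, ?_, ?_, ?_⟩
    · intro p hp _
      have := h1.2 p hp
      simp; exact this
    · have := nbig_bound ((L : ℤ) - ((0 : ℕ) : ℤ) + 2) L π h1
      simp only
      push_cast at this ⊢
      omega
    · intro p hp
      have := h1.2 p hp
      push_cast; omega

theorem gF_diag (L : ℕ) (i j : ℤ) : gf wt1 (FF L L i j) = VV L L i j := by
  rw [FF_diag, gf_image wt1 wt _ (fun x y h => (Prod.mk.inj h).1) 0 _ (fun x => rfl)
    (GG_finite _ _ _), (gG_eq L i j).1]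
  simp [VV, WW]

theorem gF_zero (M : ℕ) (i j : ℤ) (h : i + j ≤ 0) : gf wt1 (FF 0 M i j) = VV 0 M i j := by
  by_cases h0 : i = 0 ∧ j = 0
  · obtain ⟨rfl, rfl⟩ := h0
    have : FF 0 M 0 0 = {([], 0)} := by
      ext ⟨π, l⟩
      simp only [Set.mem_singleton_iff]
      constructor
      · rintro ⟨h1, h2, h3, h4, h5, h6⟩
        simp only at *
        have hl : l = 0 := by
          have := nbig_le_ia (((0 : ℕ) : ℤ) - (l : ℤ) + 2) π
          omega
        subst hl
        rcases π with _ | ⟨⟨_ | _ | _, m⟩, π⟩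
        · rfl
        · simp at h2; omega
        · simp at h3; omega
        · simp at h2; omega
      · intro h
        obtain ⟨rfl, rfl⟩ := Prod.mk.inj h
        exact ⟨⟨isType1_nil, by simp⟩, rfl, rfl, by simp, rfl, by simp⟩
    rw [this, gf, finsum_mem_singleton, VV, ee_zero, ee_zero]
    simp [wt1, wt]
  · have : FF 0 M i j = ∅ := by
      ext ⟨π, l⟩
      simp only [Set.mem_empty_iff_false, iff_false]
      rintro ⟨h1, h2, h3, -⟩
      omega
    rw [this, gf, finsum_mem_empty, VV]
    rcases lt_or_ge i 0 with hi | hi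
    · rw [ee_neg _ _ hi]; simp
    · rw [ee_neg _ j (by omega)]; simp

theorem gF_eq (M : ℕ) : ∀ (L : ℕ) (i j : ℤ), L ≤ M → i + j ≤ L →
    gf wt1 (FF L M i j) = VV L M i j := by
  induction M using Nat.strong_induction_on with
  | _ M ih =>
    intro L i j hLM hij
    rcases eq_or_lt_of_le hLM with rfl | hlt
    · exact gF_diag L i j
    rcases L with _ | L
    · exact gF_zero M i j (by simpa using hij)
    obtain ⟨M, rfl⟩ : ∃ M', M = M' + 2 := ⟨M - 2, by omega⟩
    push_cast at hij
    rw [gF_rec L M i j (by omega), VV_rec L M i j (by omega) hij,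
      ih (M + 1) (by omega) (L + 1) i j (by omega) (by push_cast; omega),
      ih (M + 1) (by omega) L (i - 1) j (by omega) (by omega),
      ih M (by omega) L (i - 1) (j - 1) (by omega) (by omega)]
    ring

/-- Decreasing lists of `k` positive integers at most `N`. -/
def DD (N : ℕ) (k : ℤ) : Set (List ℕ) :=
  {l | l.IsChain (· > ·) ∧ (∀ x ∈ l, 0 < x ∧ x ≤ N) ∧ (l.length : ℤ) = k}

theorem DD_zero (k : ℤ) : DD 0 k = {l | l = [] ∧ k = 0} := by
  ext l
  rcases l with _ | ⟨m, l⟩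
  · simp [DD, eq_comm]
  · simp only [DD, Set.mem_ofPred_eq, List.forall_mem_cons, reduceCtorEq, false_and, iff_false]
    rintro ⟨_, ⟨h, _⟩, _⟩
    omega

theorem DD_succ (N : ℕ) (k : ℤ) :
    DD (N + 1) k = DD N k ∪ List.cons (N + 1) '' DD N (k - 1) := by
  ext l
  simp only [DD, List.isChain_iff_pairwise]
  constructor
  · rintro ⟨h1, h2, h3⟩
    rcases l with _ | ⟨m, l⟩
    · exact Or.inl ⟨h1, by simp, h3⟩
    rw [List.pairwise_cons] at h1
    rw [List.forall_mem_cons] at h2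
    by_cases hm : m = N + 1
    · subst hm
      right
      refine ⟨l, ⟨h1.2, fun x hx => ?_, ?_⟩, rfl⟩
      · have := h1.1 x hx; have := h2.2 x hx; omega
      · simp at h3; omega
    · left
      refine ⟨List.pairwise_cons.2 h1, ?_, h3⟩
      rw [List.forall_mem_cons]
      refine ⟨by omega, fun x hx => ?_⟩
      have := h1.1 x hx; have := h2.2 x hx; omega
  · rintro (⟨h1, h2, h3⟩ | ⟨l, ⟨h1, h2, h3⟩, rfl⟩)
    · exact ⟨h1, fun x hx => by have := h2 x hx; omega, h3⟩
    · refine ⟨List.pairwise_cons.2 ⟨fun x hx => ?_, h1⟩, ?_, ?_⟩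
      · have := h2 x hx; omega
      · rw [List.forall_mem_cons]
        exact ⟨by omega, fun x hx => by have := h2 x hx; omega⟩
      · simp; omega

theorem DD_finite (N : ℕ) : ∀ k, (DD N k).Finite := by
  induction N with
  | zero => intro k; rw [DD_zero]; exact (Set.finite_singleton []).subset fun _ h => h.1
  | succ N ih => intro k; rw [DD_succ]; exact (ih _).union ((ih _).image _)

theorem gD_eq (N : ℕ) : ∀ k, gf List.sum (DD N k) = ee N k := by
  induction N with
  | zero =>
    intro k
    rw [DD_zero, ee]
    split_ifs with h
    · have : {l : List ℕ | l = [] ∧ k = 0} = {[]} := by ext l; simp [h]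
      rw [this, gf, finsum_mem_singleton]; simp
    · have : {l : List ℕ | l = [] ∧ k = 0} = ∅ := by ext l; simp [h]
      rw [this, gf, finsum_mem_empty]
  | succ N ih =>
    intro k
    rw [DD_succ, gf_union _ (DD_finite _ _) ((DD_finite _ _).image _),
      gf_image List.sum List.sum _ List.cons_injective (N + 1) _
        (fun x => by simp [add_comm]) (DD_finite _ _), ih, ih, ee_succ]
    rw [Set.disjoint_left]
    rintro _ h ⟨l, _, rfl⟩
    have := (h.2.1 (N + 1) (by simp)).2
    omega

theorem Vb_eq (n i j L M : ℕ) (hLM : L ≤ M) (hij : i + j ≤ L) :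
    (Vb n i j L M : ℤ) = (VV L M i j).coeff n := by
  rw [VV, ← gD_eq, ← gD_eq, ← gf_prod _ _ _ _ (DD_finite _ _) (DD_finite _ _),
    gf_coeff _ _ ((DD_finite _ _).prod (DD_finite _ _)), Vb]
  congr 2
  ext ⟨x, y⟩
  simp only [DD, Set.mem_ofPred_eq, Set.mem_prod]
  have : ∀ z : ℕ, (z : ℤ) ≤ (M : ℤ) - (j : ℤ) ↔ z ≤ ((M : ℤ) - (j : ℤ)).toNat := by
    intro z; omega
  simp only [this, Nat.cast_inj]
  change _ ∧ _ ∧ _ ↔ _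
  tauto

theorem mem_Sb (n r s t l L M : ℕ) (hLM : L ≤ M) (π : List CPart) : 
    (IsType1 π ∧
    colorCount PColor.a π = r ∧ (∀ p ∈ π, p.1 = PColor.a → p.2 ≤ M) ∧
    colorCount PColor.b π = s ∧
      (∀ p ∈ π, p.1 = PColor.b → (p.2 : ℤ) ≤ (L : ℤ) - (l : ℤ)) ∧
    colorCount PColor.ab π = t ∧ (∀ p ∈ π, p.1 = PColor.ab → p.2 ≤ M) ∧
    (π.filter (fun p => (p.1 = PColor.a ∨ p.1 = PColor.ab) ∧
      (L : ℤ) - (l : ℤ) + 2 ≤ (p.2 : ℤ))).length = l ∧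
    (∀ p ∈ π, (p.2 : ℤ) ≠ (L : ℤ) - (l : ℤ) + 1) ∧
    wt π = n) ↔ ((π, l) ∈ FF L M ((r + t : ℕ) : ℤ) ((s + t : ℕ) : ℤ) ∧ wt1 (π, l) = n) ∧
      colorCount PColor.a π = r ∧ colorCount PColor.b π = s ∧ colorCount PColor.ab π = t := by
  constructor
  · rintro ⟨h1, h2, h3, h4, h5, h6, h7, h8, h9, h10⟩
    refine ⟨⟨⟨⟨h1, ?_⟩, ?_, ?_, h5, h8, h9⟩, h10⟩, h2, h4, h6⟩
    · rintro ⟨_ | _ | _, m⟩ hp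
      · exact h3 _ hp rfl
      · have := h5 _ hp rfl
        simp at this ⊢; omega
      · exact h7 _ hp rfl
    · simp only [ia]; omega
    · simp only [ib]; omega
  · rintro ⟨⟨⟨⟨h1, h0⟩, h2, h3, h5, h8, h9⟩, h10⟩, h2, h4, h6⟩
    exact ⟨h1, h2, fun p hp _ => h0 p hp, h4, h5, h6, fun p hp _ => h0 p hp, h8, h9, h10⟩

theorem Sb_eq (n r s t l L M : ℕ) (hLM : L ≤ M) : Sb n r s t l L M =
    {x : List CPart × ℕ | (x ∈ FF L M ((r + t : ℕ) : ℤ) ((s + t : ℕ) : ℤ) ∧ wt1 x = n) ∧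
      (colorCount PColor.a x.1, colorCount PColor.b x.1, colorCount PColor.ab x.1, x.2)
        = (r, s, t, l)}.ncard := by
  rw [Sb, ← Set.ncard_image_of_injective _ (f := fun π : List CPart => (π, l))
    (fun x y h => (Prod.mk.inj h).1)]
  congr 1
  ext ⟨π, l'⟩
  simp only [Set.mem_image, Set.mem_ofPred_eq, mem_Sb n r s t l L M hLM, Prod.mk.injEq]
  constructor
  · rintro ⟨π', ⟨h, h1, h2, h3⟩, rfl, rfl⟩
    exact ⟨h, h1, h2, h3, rfl⟩
  · rintro ⟨h, h1, h2, h3, rfl⟩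
    exact ⟨π, ⟨h, h1, h2, h3⟩, rfl, rfl⟩

theorem sum_Sb (n i j L M : ℕ) (hLM : L ≤ M) :
    ∑ᶠ (r : ℕ) (s : ℕ) (t : ℕ) (l : ℕ),
      (if r + t = i ∧ s + t = j then Sb n r s t l L M else 0) =
    {x | x ∈ FF L M i j ∧ wt1 x = n}.ncard := by
  classical
  set S : Set (List CPart × ℕ) := {x | x ∈ FF L M i j ∧ wt1 x = n} with hS
  have hfin : S.Finite := (FF_finite L M i j).subset fun _ h => h.1
  let f : List CPart × ℕ → ℕ × ℕ × ℕ × ℕ := fun x =>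
    (colorCount PColor.a x.1, colorCount PColor.b x.1, colorCount PColor.ab x.1, x.2)
  have hmem : ∀ x ∈ S, (f x).1 + (f x).2.2.1 = i ∧ (f x).2.1 + (f x).2.2.1 = j ∧
      (f x).2.2.2 ≤ i := by
    rintro ⟨π, l⟩ ⟨⟨h1, h2, h3, h4, h5, h6⟩, -⟩
    have := nbig_le_ia ((L : ℤ) - (l : ℤ) + 2) π
    simp only [ia, ib] at h2 h3 h5 this
    simp only [f]
    omega
  have key : ∀ r s t l : ℕ, (if r + t = i ∧ s + t = j then Sb n r s t l L M else 0) =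
      (hfin.toFinset.filter (fun x => f x = (r, s, t, l))).card := by
    intro r s t l
    split_ifs with h
    · obtain ⟨rfl, rfl⟩ := h
      rw [Sb_eq _ _ _ _ _ _ _ hLM, ← Set.ncard_coe_finset]
      congr 1
      ext x
      simp [f, hS]
    · symm
      rw [Finset.card_eq_zero, Finset.filter_eq_empty_iff]
      intro x hx hfx
      have := hmem x (by simpa using hx)
      rw [hfx] at this
      exact h ⟨this.1, this.2.1⟩
  simp only [key]
  have zero : ∀ r s t l : ℕ, ¬ (r ≤ i ∧ s ≤ j ∧ t ≤ i ∧ l ≤ i) →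
      (hfin.toFinset.filter (fun x => f x = (r, s, t, l))).card = 0 := by
    intro r s t l h
    rw [Finset.card_eq_zero, Finset.filter_eq_empty_iff]
    intro x hx hfx
    have := hmem x (by simpa using hx)
    rw [hfx] at this
    simp only at this
    omega
  have fs : ∀ (g : ℕ → ℕ) (K : ℕ), (∀ m, ¬ m ≤ K → g m = 0) →
      ∑ᶠ m, g m = ∑ m ∈ Finset.range (K + 1), g m := by
    intro g K hg
    apply finsum_eq_sum_of_support_subset
    intro m hm
    by_contra hcon
    simp at hcon
    exact hm (hg m (by omega))
  have e1 : ∀ r s t, ∑ᶠ l : ℕ, (hfin.toFinset.filter (fun x => f x = (r, s, t, l))).card =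
      ∑ l ∈ Finset.range (i + 1), (hfin.toFinset.filter (fun x => f x = (r, s, t, l))).card :=
    fun r s t => fs _ _ fun m hm => zero _ _ _ _ (by tauto)
  simp only [e1]
  have e2 : ∀ r s, ∑ᶠ t : ℕ, ∑ l ∈ Finset.range (i + 1),
        (hfin.toFinset.filter (fun x => f x = (r, s, t, l))).card =
      ∑ t ∈ Finset.range (i + 1), ∑ l ∈ Finset.range (i + 1),
        (hfin.toFinset.filter (fun x => f x = (r, s, t, l))).card :=
    fun r s => fs _ _ fun m hm => Finset.sum_eq_zero fun _ _ => zero _ _ _ _ (by tauto)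
  simp only [e2]
  have e3 : ∀ r, ∑ᶠ s : ℕ, ∑ t ∈ Finset.range (i + 1), ∑ l ∈ Finset.range (i + 1),
        (hfin.toFinset.filter (fun x => f x = (r, s, t, l))).card =
      ∑ s ∈ Finset.range (j + 1), ∑ t ∈ Finset.range (i + 1), ∑ l ∈ Finset.range (i + 1),
        (hfin.toFinset.filter (fun x => f x = (r, s, t, l))).card :=
    fun r => fs _ _ fun m hm => Finset.sum_eq_zero fun _ _ => Finset.sum_eq_zero fun _ _ =>
      zero _ _ _ _ (by tauto)
  simp only [e3]
  rw [fs _ i fun m hm => Finset.sum_eq_zero fun _ _ => Finset.sum_eq_zero fun _ _ =>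
    Finset.sum_eq_zero fun _ _ => zero _ _ _ _ (by tauto)]
  rw [Set.ncard_eq_toFinset_card _ hfin]
  rw [Finset.card_eq_sum_card_fiberwise (f := f) (t := Finset.range (i + 1) ×ˢ
    Finset.range (j + 1) ×ˢ Finset.range (i + 1) ×ˢ Finset.range (i + 1))]
  · simp only [Finset.sum_product]
  · intro x hx
    have := hmem x (by simpa using hx)
    simp only [Finset.coe_product, Set.mem_prod, Finset.coe_range, Set.mem_Iio]
    omega

end pairs

/-- Theorem 2: for `M ≥ L ≥ i + j`,
`V(n; i, j, L, M) = ∑_{r+t=i, s+t=j} ∑_{l ≥ 0} S(n; r, s, t, l, L, M)`. -/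
theorem double_bounded_refined_schur_colored (n i j L M : ℕ)
    (hLM : L ≤ M) (hij : i + j ≤ L) :
    Vb n i j L M = ∑ᶠ (r : ℕ) (s : ℕ) (t : ℕ) (l : ℕ),
      (if r + t = i ∧ s + t = j then Sb n r s t l L M else 0) := by
  rw [sum_Sb n i j L M hLM]
  have h := Vb_eq n i j L M hLM hij
  rw [← gF_eq M L i j hLM (by exact_mod_cast hij), gf_coeff _ _ (FF_finite _ _ _ _)] at h
  exact_mod_cast h
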